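/- The covariance of the stationary fractional Ornstein–Uhlenbeck process admits the spectral representation: σ_ou²·(1/Γ(2H+1))·[(1/2)∫_ℝ e^{−|v|}|as+v|^{2H} dv − |as|^{2H}] = σ_ou²·(2 sin(πH)/π)·∫₀^∞ cos(asx)·x^{1−2H}/(1+x²) dx, for all s ∈ ℝ. -/

import Mathlib

open Real MeasureTheory

lemma fou_abs_int (q : ℝ) (hq : -1 < q) :
    ∫ v : ℝ, Real.exp (-|v|) * |v| ^ q = 2 * Real.Gamma (q+1) := by
  rw [integral_comp_abs (f := fun x => Real.exp (-x) * x ^ q), Real.Gamma_eq_integral (by linarith)]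
  simp

lemma fou_abs_integrable (q : ℝ) (hq : -1 < q) :
    Integrable (fun v : ℝ => Real.exp (-|v|) * |v| ^ q) := by
  apply Integrable.of_integral_ne_zero
  rw [fou_abs_int q hq]
  have := Real.Gamma_pos_of_pos (s := q+1) (by linarith)
  positivity

lemma fou_exp_integrable : Integrable (fun v : ℝ => Real.exp (-|v|)) := by
  simpa using fou_abs_integrable 0 (by norm_num)

lemma fou_shift_integrable (p : ℝ) (hp : 0 < p) (hp2 : p < 2) (c : ℝ) :
    Integrable (fun v : ℝ => Real.exp (-|v|) * |c + v| ^ p) := by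
  have h1 := fou_exp_integrable.const_mul (1 + 2*c^2)
  have h2 := (fou_abs_integrable 2 (by norm_num)).const_mul 2
  refine (h1.add h2).mono' ?_ ?_
  · exact (by fun_prop : Measurable (fun v : ℝ => Real.exp (-|v|) * |c + v| ^ p)).aestronglyMeasurable
  · refine Filter.Eventually.of_forall fun v => ?_
    rw [Real.norm_of_nonneg (by positivity)]
    have hb : |c+v| ^ p ≤ 1 + |c+v|^2 := by
      rcases le_total (|c+v|) 1 with h | h
      · have := Real.rpow_le_one (abs_nonneg (c+v)) h hp.le
        nlinarith [sq_nonneg (|c+v|)]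
      · have := Real.rpow_le_rpow_of_exponent_le h hp2.le
        rw [Real.rpow_two] at this
        linarith
    rw [sq_abs] at hb
    have hE := Real.exp_pos (-|v|)
    simp only [Pi.add_apply, Real.rpow_two, sq_abs]
    have : |c+v| ^ p ≤ (1 + 2*c^2) + 2 * v^2 := by nlinarith [sq_nonneg (c - v)]
    nlinarith [mul_le_mul_of_nonneg_left this hE.le]

lemma fou_cos (x c : ℝ) :
    ∫ v : ℝ, Real.exp (-|v|) * Real.cos ((c+v)*x) = 2 * Real.cos (c*x) / (1+x^2) := by
  have hint : ∀ b : ℝ, Integrable (fun v : ℝ => Real.exp (-|v|) * Real.cos (b+v*x)) := by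
    intro b
    refine fou_exp_integrable.mono' ?_ ?_
    · exact (by fun_prop : Measurable _).aestronglyMeasurable
    · refine Filter.Eventually.of_forall fun v => ?_
      rw [norm_mul, Real.norm_of_nonneg (Real.exp_pos _).le]
      exact mul_le_of_le_one_right (Real.exp_pos _).le (Real.abs_cos_le_one _)
  have hC : Integrable (fun v : ℝ => (Real.exp (-|v|) : ℂ) * Complex.exp (Complex.I * x * v)) := by
    refine fou_exp_integrable.mono' ?_ ?_
    · exact (by fun_prop : Measurable _).aestronglyMeasurable
    · refine Filter.Eventually.of_forall fun v => ?_
      rw [norm_mul, Complex.norm_exp]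
      simp [Complex.norm_exp]
  have key : ∫ v : ℝ, (Real.exp (-|v|) : ℂ) * Complex.exp (Complex.I * x * v) = 2 / (1 + (x:ℂ)^2) := by
    rw [← intervalIntegral.integral_Iic_add_Ioi (b := 0) hC.integrableOn hC.integrableOn]
    have e1 : ∫ v in Set.Iic (0:ℝ), (Real.exp (-|v|) : ℂ) * Complex.exp (Complex.I * x * v)
        = ∫ v in Set.Iic (0:ℝ), Complex.exp ((1 + Complex.I * x) * v) := by
      refine setIntegral_congr_fun measurableSet_Iic fun v hv => ?_
      rw [abs_of_nonpos hv, Complex.ofReal_exp, ← Complex.exp_add]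
      push_cast; ring_nf
    have e2 : ∫ v in Set.Ioi (0:ℝ), (Real.exp (-|v|) : ℂ) * Complex.exp (Complex.I * x * v)
        = ∫ v in Set.Ioi (0:ℝ), Complex.exp ((-1 + Complex.I * x) * v) := by
      refine setIntegral_congr_fun measurableSet_Ioi fun v hv => ?_
      rw [abs_of_pos hv, Complex.ofReal_exp, ← Complex.exp_add]
      push_cast; ring_nf
    rw [e1, e2, integral_exp_mul_complex_Iic (by simp), integral_exp_mul_complex_Ioi (by simp)]
    have n1 : (1 + Complex.I * x) ≠ 0 := fun h => by simpa using congrArg Complex.re h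
    have n2 : (-1 + Complex.I * x) ≠ 0 := fun h => by simpa using congrArg Complex.re h
    have n3 : (1 + (x:ℂ)^2) ≠ 0 := by
      have : (1 + x^2 : ℝ) ≠ 0 := by positivity
      exact_mod_cast this
    simp only [Complex.ofReal_zero, mul_zero, Complex.exp_zero]
    field_simp
    linear_combination (-2 * (x:ℂ)^2) * Complex.I_sq
  have h2 : ∫ v : ℝ, (Real.exp (-|v|) : ℂ) * Complex.exp (Complex.I * ((c + v)*x : ℝ))
      = Complex.exp (Complex.I * (c*x:ℝ)) * (2 / (1 + (x:ℂ)^2)) := by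
    rw [← key, ← integral_const_mul]
    congr 1; ext v
    rw [mul_left_comm, ← Complex.exp_add]
    push_cast; ring_nf
  have hC2 : Integrable (fun v : ℝ => (Real.exp (-|v|) : ℂ) * Complex.exp (Complex.I * ((c + v)*x : ℝ))) := by
    refine (hC.const_mul (Complex.exp (Complex.I * (c*x:ℝ)))).congr (Filter.Eventually.of_forall fun v => ?_)
    simp only
    rw [mul_left_comm, ← Complex.exp_add]
    push_cast; ring_nf
  have h3 := congrArg Complex.re h2
  rw [← RCLike.re_to_complex, ← integral_re hC2] at h3
  have h4 : ∀ θ : ℝ, (Complex.exp (Complex.I * θ)).re = Real.cos θ := by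
    intro θ; rw [mul_comm, Complex.exp_ofReal_mul_I_re]
  simp only [RCLike.re_to_complex, Complex.re_ofReal_mul, h4] at h3
  rw [h3, show (2 / (1 + (x:ℂ)^2)) = ((2/(1+x^2) : ℝ):ℂ) by push_cast; rfl, Complex.re_mul_ofReal, h4]
  ring

lemma fou_K_integrable (p : ℝ) (hp : 0 < p) (hp2 : p < 2) :
    IntegrableOn (fun x : ℝ => (1 - Real.cos x) * x ^ (-1-p)) (Set.Ioi 0) := by
  have hm : Measurable (fun x : ℝ => (1 - Real.cos x) * x ^ (-1-p)) := by fun_prop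
  rw [← Set.Ioc_union_Ioi_eq_Ioi (zero_le_one (α := ℝ)), integrableOn_union]
  constructor
  · have h := (intervalIntegral.intervalIntegrable_rpow' (a := 0) (b := 1) (r := 1-p) (by linarith))
    rw [intervalIntegrable_iff_integrableOn_Ioc_of_le zero_le_one] at h
    refine Integrable.mono' h hm.aestronglyMeasurable ?_
    filter_upwards [ae_restrict_mem measurableSet_Ioc] with x hx
    have h0 := hx.1
    rw [Real.norm_of_nonneg (mul_nonneg (by linarith [Real.cos_le_one x]) (by positivity)),
      show (1-p) = 2 + (-1-p) by ring, Real.rpow_add h0, Real.rpow_two]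
    gcongr
    nlinarith [Real.one_sub_sq_div_two_le_cos (x := x), sq_nonneg x]
  · have h := (integrableOn_Ioi_rpow_of_lt (a := -1-p) (c := 1) (by linarith) one_pos).const_mul 2
    refine Integrable.mono' h hm.aestronglyMeasurable ?_
    filter_upwards [ae_restrict_mem measurableSet_Ioi] with x hx
    have h0 : 0 < x := lt_trans one_pos hx
    rw [Real.norm_of_nonneg (mul_nonneg (by linarith [Real.cos_le_one x]) (by positivity))]
    gcongr
    linarith [Real.neg_one_le_cos x]

lemma fou_congr (p u : ℝ) (hu : u ≠ 0) (x : ℝ) (hx : x ∈ Set.Ioi (0:ℝ)) :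
    (1 - Real.cos (u*x)) * x ^ (-1-p)
      = |u| ^ (1+p) * ((1 - Real.cos (|u| * x)) * (|u| * x) ^ (-1-p)) := by
  have h0 : 0 < |u| := abs_pos.mpr hu
  have hx' : (0:ℝ) < x := hx
  have : |u| ^ (1+p) * |u| ^ (-1-p) = 1 := by
    rw [← Real.rpow_add h0]; ring_nf; simp
  rw [Real.mul_rpow h0.le hx'.le, ← Real.cos_abs (u*x), abs_mul, abs_of_pos hx']
  linear_combination (-(1 - Real.cos (|u| * x)) * x ^ (-1-p)) * this

lemma fou_scale_integrable (p : ℝ) (hp : 0 < p) (hp2 : p < 2) (u : ℝ) :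
    IntegrableOn (fun x : ℝ => (1 - Real.cos (u*x)) * x ^ (-1-p)) (Set.Ioi 0) := by
  rcases eq_or_ne u 0 with rfl | hu
  · simp
  have h0 : 0 < |u| := abs_pos.mpr hu
  rw [integrableOn_congr_fun (fou_congr p u hu) measurableSet_Ioi]
  refine Integrable.const_mul ?_ _
  have := (integrableOn_Ioi_comp_mul_left_iff (fun x : ℝ => (1 - Real.cos x) * x ^ (-1-p)) 0 h0)
  rw [mul_zero] at this
  exact this.2 (fou_K_integrable p hp hp2)

lemma fou_scale (p : ℝ) (hp : 0 < p) (u : ℝ) :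
    ∫ x in Set.Ioi (0:ℝ), (1 - Real.cos (u*x)) * x ^ (-1-p)
      = |u| ^ p * ∫ x in Set.Ioi (0:ℝ), (1 - Real.cos x) * x ^ (-1-p) := by
  rcases eq_or_ne u 0 with rfl | hu
  · simp [Real.zero_rpow hp.ne']
  have h0 : 0 < |u| := abs_pos.mpr hu
  rw [setIntegral_congr_fun measurableSet_Ioi (fou_congr p u hu), integral_const_mul,
    integral_comp_mul_left_Ioi (fun x : ℝ => (1 - Real.cos x) * x ^ (-1-p)) 0 h0, mul_zero,
    Real.rpow_add h0, Real.rpow_one, smul_eq_mul]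
  field_simp

lemma fou_main (p : ℝ) (hp : 0 < p) (hp2 : p < 2) (c : ℝ) :
    (∫ x in Set.Ioi (0:ℝ), (1 - Real.cos x) * x ^ (-1-p)) *
      ((1/2) * (∫ v : ℝ, Real.exp (-|v|) * |c + v| ^ p) - |c| ^ p)
    = ∫ x in Set.Ioi (0:ℝ), Real.cos (c*x) * x ^ (1 - p) / (1 + x^2) := by
  set K := ∫ x in Set.Ioi (0:ℝ), (1 - Real.cos x) * x ^ (-1-p) with hK
  set f : ℝ → ℝ → ℝ := fun v x => Real.exp (-|v|) * ((1 - Real.cos ((c+v)*x)) * x ^ (-1-p)) with hf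
  have hin : ∀ v, ∫ x in Set.Ioi (0:ℝ), f v x = K * (Real.exp (-|v|) * |c+v| ^ p) := by
    intro v
    simp only [hf]
    rw [integral_const_mul, fou_scale p hp]; ring
  have hFm : Measurable (Function.uncurry f) := by
    simp only [hf, Function.uncurry_def]; fun_prop
  have hF : Integrable (Function.uncurry f) (volume.prod (volume.restrict (Set.Ioi (0:ℝ)))) := by
    rw [integrable_prod_iff hFm.aestronglyMeasurable]
    constructor
    · exact Filter.Eventually.of_forall fun v =>
        Integrable.const_mul (fou_scale_integrable p hp hp2 (c+v)) (Real.exp (-|v|))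
    · refine ((fou_shift_integrable p hp hp2 c).const_mul K).congr (Filter.Eventually.of_forall fun v => ?_)
      simp only
      rw [← hin v]
      refine setIntegral_congr_fun measurableSet_Ioi fun x hx => ?_
      have hx' : (0:ℝ) < x := hx
      simp only [hf, Function.uncurry_apply_pair]
      rw [Real.norm_of_nonneg]
      exact mul_nonneg (Real.exp_pos _).le
        (mul_nonneg (by linarith [Real.cos_le_one ((c+v)*x)]) (by positivity))
  have hswap := integral_integral_swap hF
  have hout : ∀ x, ∫ v, f v x = (2 - 2 * Real.cos (c*x) / (1+x^2)) * x ^ (-1-p) := by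
    intro x
    have e0 : ∫ v : ℝ, Real.exp (-|v|) = 2 := by
      simpa using fou_abs_int 0 (by norm_num)
    have hi : Integrable (fun v : ℝ => Real.exp (-|v|) * Real.cos ((c+v)*x)) := by
      refine fou_exp_integrable.mono' ?_ ?_
      · exact (by fun_prop : Measurable _).aestronglyMeasurable
      · refine Filter.Eventually.of_forall fun v => ?_
        rw [norm_mul, Real.norm_of_nonneg (Real.exp_pos _).le]
        exact mul_le_of_le_one_right (Real.exp_pos _).le (Real.abs_cos_le_one _)
    rw [← fou_cos x c, ← e0, ← integral_sub fou_exp_integrable hi, ← integral_mul_const]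
    congr 1; ext v; simp only [hf]; ring
  have hoi : IntegrableOn (fun x : ℝ => (2 - 2 * Real.cos (c*x) / (1+x^2)) * x ^ (-1-p)) (Set.Ioi 0) :=
    hF.integral_prod_right.congr (Filter.Eventually.of_forall fun x => hout x)
  simp only [hin, hout] at hswap
  rw [integral_const_mul] at hswap
  have hsc := fou_scale p hp c
  rw [← hK] at hsc
  have : K * ((1/2) * (∫ v : ℝ, Real.exp (-|v|) * |c + v| ^ p) - |c| ^ p)
    = (1/2) * (K * ∫ v : ℝ, Real.exp (-|v|) * |c + v| ^ p) - |c| ^ p * K := by ring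
  rw [this, hswap, ← hsc, ← integral_const_mul, ← integral_sub (hoi.const_mul _) (fou_scale_integrable p hp hp2 c)]
  refine setIntegral_congr_fun measurableSet_Ioi fun x hx => ?_
  have hx' : (0:ℝ) < x := hx
  rw [show (1-p) = 2 + (-1-p) by ring, Real.rpow_add hx', Real.rpow_two]
  field_simp
  ring

lemma fou_beta (H : ℝ) (h0 : 0 < H) (h1 : H < 1) :
    ∫ x in Set.Ioi (0:ℝ), x ^ (1 - 2*H) / (1 + x^2) = Real.pi / (2 * Real.sin (Real.pi * H)) := by
  set f : ℝ → ℝ → ℝ := fun y x => Real.exp (-y) * (x ^ (1-2*H) * Real.exp (-y * x ^ (2:ℝ))) with hf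
  have hin : ∀ y ∈ Set.Ioi (0:ℝ), ∫ x in Set.Ioi (0:ℝ), f y x
      = (1/2 * Real.Gamma (1-H)) * (Real.exp (-y) * y ^ (H-1)) := by
    intro y hy
    simp only [hf]
    rw [integral_const_mul, integral_rpow_mul_exp_neg_mul_rpow two_pos (by linarith) hy,
      show -(1-2*H+1)/2 = H-1 by ring, show (1-2*H+1)/2 = 1-H by ring]
    ring
  have hFm : Measurable (Function.uncurry f) := by
    simp only [hf, Function.uncurry_def]; fun_prop
  have hF : Integrable (Function.uncurry f)
      ((volume.restrict (Set.Ioi (0:ℝ))).prod (volume.restrict (Set.Ioi (0:ℝ)))) := by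
    rw [integrable_prod_iff hFm.aestronglyMeasurable]
    constructor
    · filter_upwards [ae_restrict_mem measurableSet_Ioi] with y hy
      exact Integrable.const_mul (integrableOn_rpow_mul_exp_neg_mul_rpow (s := 1-2*H) (by linarith) two_pos hy) (Real.exp (-y))
    · refine ((Real.GammaIntegral_convergent h0).const_mul (1/2 * Real.Gamma (1-H))).congr ?_
      filter_upwards [ae_restrict_mem measurableSet_Ioi] with y hy
      rw [← hin y hy]
      refine setIntegral_congr_fun measurableSet_Ioi fun x hx => ?_
      have hx' : (0:ℝ) < x := hx
      simp only [hf, Function.uncurry_apply_pair]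
      rw [Real.norm_of_nonneg (by positivity)]
  have hswap := integral_integral_swap hF
  rw [setIntegral_congr_fun measurableSet_Ioi hin, integral_const_mul,
    ← Real.Gamma_eq_integral h0] at hswap
  have hout : ∀ x ∈ Set.Ioi (0:ℝ), ∫ y in Set.Ioi (0:ℝ), f y x = x ^ (1 - 2*H) / (1 + x^2) := by
    intro x hx
    have := integral_rpow_mul_exp_neg_mul_Ioi (a := 1) (r := 1 + x^2) one_pos (by positivity)
    simp only [sub_self, Real.rpow_zero, one_mul, Real.rpow_one, Real.Gamma_one, mul_one] at this
    rw [div_eq_mul_one_div, ← this, ← integral_const_mul]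
    congr 1; ext y
    simp only [hf, Real.rpow_two]
    rw [mul_left_comm, ← Real.exp_add]; ring_nf
  rw [setIntegral_congr_fun measurableSet_Ioi hout] at hswap
  rw [← hswap]
  have := Real.Gamma_mul_Gamma_one_sub H
  rw [show Real.pi / (2 * Real.sin (Real.pi * H)) = 1/2 * (Real.pi / Real.sin (Real.pi * H)) by
    rw [mul_comm 2, ← div_div]; ring, ← this]
  ring

/-- Spectral representation of the covariance of the stationary fractional
Ornstein–Uhlenbeck process: for all `s ∈ ℝ`,
`σ_ou²·(1/Γ(2H+1))·[(1/2)∫_ℝ e^{−|v|}|as+v|^{2H} dv − |as|^{2H}]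
  = σ_ou²·(2 sin(πH)/π)·∫₀^∞ cos(asx)·x^{1−2H}/(1+x²) dx`. -/
theorem fou_covariance_spectral (H a σou2 : ℝ)
    (hH : H ∈ Set.Ioo (0:ℝ) 1) (ha : 0 < a) (hσ : 0 < σou2) (s : ℝ) :
    σou2 * (1 / Real.Gamma (2*H + 1)) *
      ((1/2) * (∫ v : ℝ, Real.exp (-|v|) * |a*s + v| ^ (2*H)) - |a*s| ^ (2*H))
    = σou2 * (2 * Real.sin (Real.pi * H) / Real.pi) *
      ∫ x in Set.Ioi (0:ℝ), Real.cos (a*s*x) * x ^ (1 - 2*H) / (1 + x^2) := by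
  obtain ⟨h0, h1⟩ := hH
  have hp : 0 < 2*H := by linarith
  have hm := fou_main (2*H) hp (by linarith) (a*s)
  have hz := fou_main (2*H) hp (by linarith) 0
  simp only [zero_add, zero_mul, Real.cos_zero, one_mul, abs_zero, Real.zero_rpow hp.ne', sub_zero] at hz
  rw [fou_beta H h0 h1, fou_abs_int _ (by linarith)] at hz
  rw [← hm]
  have hs : 0 < Real.sin (Real.pi * H) := Real.sin_pos_of_pos_of_lt_pi (by positivity)
    (by nlinarith [Real.pi_pos])
  have hG := Real.Gamma_pos_of_pos (s := 2*H+1) (by linarith)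
  have hpi := Real.pi_pos
  have hk : 1 / Real.Gamma (2*H+1) = (2 * Real.sin (Real.pi * H) / Real.pi) *
      ∫ x in Set.Ioi (0:ℝ), (1 - Real.cos x) * x ^ (-1-2*H) := by
    generalize (∫ x in Set.Ioi (0:ℝ), (1 - Real.cos x) * x ^ (-1-2*H)) = K at *
    rw [eq_div_iff (by positivity)] at hz
    rw [div_mul_eq_mul_div, div_eq_div_iff hG.ne' hpi.ne']
    linarith
  rw [hk]
  ring
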